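/- Let T be a deterministic two-way parity transducer and let T′ be the two-way transducer obtained from T by dropping the acceptance condition (replacing χ by ∅). Then dom(T) ⊆ dom(T′), ⟦T′⟧ agrees with ⟦T⟧ on dom(T), and for every u ∈ dom(T′) and every sequence (u_i) of words of dom(T) converging to u in the metric d(u,v) = 2^{−|u∧v|}, the sequence ⟦T⟧(u_i) converges to ⟦T′⟧(u). -/

import Mathlib

namespace Paper

/-! ## Two-way parity automata and transducers over infinite words.

An infinite word over an alphabet `A` is a function `ℕ → A`.
A configuration `⊢ u p v` with `w = u v` is encoded as a pair `(p, |u|) : Q × ℕ`.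
The left end-marker `⊢` is encoded as `(none : Option A)`. -/

/-- A two-way automaton (without acceptance condition): states `Q` partitioned into forward
states (`fwd`) and backward states, an initial forward state, and a transition relation `Δ`
over `Q × (A ∪ {⊢}) × Q` where transitions on the end-marker `⊢` (encoded `none`) go from
backward to forward states. -/
structure TwoWayAut (A : Type) where
  Q : Type
  finQ : Fintype Q
  fwd : Q → Prop
  init : Q
  init_fwd : fwd init
  Δ : Set (Q × Option A × Q)
  marker : ∀ p q, (p, (none : Option A), q) ∈ Δ → ¬ fwd p ∧ fwd q

attribute [instance] TwoWayAut.finQ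

variable {A B : Type}

/-- `StepVia M w c t c'` : from configuration `c`, using transition `t`, the automaton `M`
reaches the successor configuration `c'` on input word `w`. -/
def StepVia (M : TwoWayAut A) (w : ℕ → A) (c : M.Q × ℕ)
    (t : M.Q × Option A × M.Q) (c' : M.Q × ℕ) : Prop :=
  t ∈ M.Δ ∧ t.1 = c.1 ∧ t.2.2 = c'.1 ∧
    ((M.fwd c.1 ∧ t.2.1 = some (w c.2) ∧
        ((M.fwd c'.1 ∧ c'.2 = c.2 + 1) ∨ (¬ M.fwd c'.1 ∧ c'.2 = c.2))) ∨
     (¬ M.fwd c.1 ∧ 0 < c.2 ∧ t.2.1 = some (w (c.2 - 1)) ∧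
        ((M.fwd c'.1 ∧ c'.2 = c.2) ∨ (¬ M.fwd c'.1 ∧ c'.2 = c.2 - 1))) ∨
     (¬ M.fwd c.1 ∧ c.2 = 0 ∧ t.2.1 = none ∧ c'.2 = 0))

/-- The successor relation on configurations. -/
def Step (M : TwoWayAut A) (w : ℕ → A) (c c' : M.Q × ℕ) : Prop :=
  ∃ t, StepVia M w c t c'

/-- An infinite run of `M` on `w`, given by its configurations and the transitions taken. -/
def IsRun (M : TwoWayAut A) (w : ℕ → A) (cfg : ℕ → M.Q × ℕ)
    (tr : ℕ → M.Q × Option A × M.Q) : Prop :=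
  cfg 0 = (M.init, 0) ∧ ∀ i, StepVia M w (cfg i) (tr i) (cfg (i + 1))

/-- The run reads the whole word: the prefix lengths are unbounded. -/
def ReadsWhole (M : TwoWayAut A) (cfg : ℕ → M.Q × ℕ) : Prop :=
  ∀ n : ℕ, ∃ i, n ≤ (cfg i).2

/-- `t` occurs infinitely often in the sequence `tr`. -/
def InfOften {T : Type} (tr : ℕ → T) (t : T) : Prop :=
  ∀ n, ∃ i, n ≤ i ∧ tr i = t

def Deterministic (M : TwoWayAut A) : Prop :=
  ∀ p a q q', (p, a, q) ∈ M.Δ → (p, a, q') ∈ M.Δ → q = q'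

def Codeterministic (M : TwoWayAut A) : Prop :=
  ∀ p p' a q, (p, a, q) ∈ M.Δ → (p', a, q) ∈ M.Δ → p = p'

def Reversible (M : TwoWayAut A) : Prop :=
  Deterministic M ∧ Codeterministic M

def Oneway (M : TwoWayAut A) : Prop := ∀ q, M.fwd q

/-- A two-way parity automaton: a two-way automaton together with a finite family of
coloring functions (indexed by `CIdx`). -/
structure ParityAut (A : Type) extends TwoWayAut A where
  CIdx : Type
  finC : Fintype CIdx
  color : CIdx → (Q × Option A × Q) → ℕ

attribute [instance] ParityAut.finC

/-- The parity acceptance condition: for every coloring function, the minimal color of the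
transitions taken infinitely often is even. -/
def ParityCond (M : ParityAut A) (tr : ℕ → M.Q × Option A × M.Q) : Prop :=
  ∀ c : M.CIdx, Even (sInf {m : ℕ | ∃ t, InfOften tr t ∧ M.color c t = m})

/-- Acceptance of an infinite word by a two-way parity automaton. -/
def ParityAut.Accepts (M : ParityAut A) (w : ℕ → A) : Prop :=
  ∃ cfg tr, IsRun M.toTwoWayAut w cfg tr ∧ ReadsWhole M.toTwoWayAut cfg ∧ ParityCond M tr

/-- All colors of `M` (on its transitions) belong to `{0, …, ℓ-1}`. -/
def ColorsLt (M : ParityAut A) (ℓ : ℕ) : Prop :=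
  ∀ (c : M.CIdx) t, t ∈ M.Δ → M.color c t < ℓ

/-- `l` is a prefix of the infinite word `x`. -/
def IsPrefixOf {C : Type} (l : List C) (x : ℕ → C) : Prop :=
  ∀ (i : ℕ) (h : i < l.length), l.get ⟨i, h⟩ = x i

/-- Concatenation of the first `n` words of a sequence of finite words. -/
def prefixCat {C : Type} (f : ℕ → List C) : ℕ → List C
  | 0 => []
  | n + 1 => prefixCat f n ++ f n

/-- The concatenation of the sequence of finite words `f` is the infinite word `x`. -/
def FlattenTo {C : Type} (f : ℕ → List C) (x : ℕ → C) : Prop :=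
  (∀ n, IsPrefixOf (prefixCat f n) x) ∧ ∀ m, ∃ n, m ≤ (prefixCat f n).length

/-- A two-way parity transducer: a two-way parity automaton (whose underlying automaton is
required to be deterministic via hypotheses) together with an output function. -/
structure TwoWayTrans (A B : Type) extends ParityAut A where
  out : (Q × Option A × Q) → List B

/-- `T.Realizes w x` : the word `w` is accepted by (the deterministic transducer) `T`,
the produced output is infinite and equals `x`.  This is the graph of the partial function
`⟦T⟧ : A^ω ⇀ B^ω`. -/
def TwoWayTrans.Realizes (T : TwoWayTrans A B) (w : ℕ → A) (x : ℕ → B) : Prop :=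
  ∃ cfg tr, IsRun T.toTwoWayAut w cfg tr ∧ ReadsWhole T.toTwoWayAut cfg ∧
    ParityCond T.toParityAut tr ∧ FlattenTo (fun i => T.out (tr i)) x

/-- A two-way Büchi transducer: accepting transitions `acc` instead of coloring functions. -/
structure BuchiTrans (A B : Type) extends TwoWayAut A where
  acc : Set (Q × Option A × Q)
  out : (Q × Option A × Q) → List B

def BuchiTrans.Realizes (T : BuchiTrans A B) (w : ℕ → A) (x : ℕ → B) : Prop :=
  ∃ cfg tr, IsRun T.toTwoWayAut w cfg tr ∧ ReadsWhole T.toTwoWayAut cfg ∧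
    (∀ n, ∃ i, n ≤ i ∧ tr i ∈ T.acc) ∧ FlattenTo (fun i => T.out (tr i)) x

/-- A two-way transducer with no acceptance condition. -/
structure NoAccTrans (A B : Type) extends TwoWayAut A where
  out : (Q × Option A × Q) → List B

def NoAccTrans.Realizes (T : NoAccTrans A B) (w : ℕ → A) (x : ℕ → B) : Prop :=
  ∃ cfg tr, IsRun T.toTwoWayAut w cfg tr ∧ ReadsWhole T.toTwoWayAut cfg ∧
    FlattenTo (fun i => T.out (tr i)) x

/-! ## One-way parity automata, transducers, and copyless parity streaming string
transducers.  A one-way automaton has only forward states and never reads the end-marker,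
so we use a simplified (equivalent) presentation. -/

structure OnewayAut (A : Type) where
  Q : Type
  finQ : Fintype Q
  init : Q
  Δ : Set (Q × A × Q)
  CIdx : Type
  finC : Fintype CIdx
  color : CIdx → (Q × A × Q) → ℕ

attribute [instance] OnewayAut.finQ
attribute [instance] OnewayAut.finC

def OnewayDet (M : OnewayAut A) : Prop :=
  ∀ p a q q', (p, a, q) ∈ M.Δ → (p, a, q') ∈ M.Δ → q = q'

def OnewayRun (M : OnewayAut A) (w : ℕ → A) (s : ℕ → M.Q) : Prop :=
  s 0 = M.init ∧ ∀ i, (s i, w i, s (i + 1)) ∈ M.Δ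

def OnewayParityCond (M : OnewayAut A) (tr : ℕ → M.Q × A × M.Q) : Prop :=
  ∀ c : M.CIdx, Even (sInf {m : ℕ | ∃ t, InfOften tr t ∧ M.color c t = m})

def OnewayAut.Accepts (M : OnewayAut A) (w : ℕ → A) : Prop :=
  ∃ s, OnewayRun M w s ∧ OnewayParityCond M (fun i => (s i, w i, s (i + 1)))

def OnewayColorsLt (M : OnewayAut A) (ℓ : ℕ) : Prop :=
  ∀ (c : M.CIdx) t, t ∈ M.Δ → M.color c t < ℓ

/-- A one-way (deterministic) parity transducer. -/
structure OnewayTrans (A B : Type) extends OnewayAut A where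
  out : (Q × A × Q) → List B

def OnewayTrans.Realizes (T : OnewayTrans A B) (w : ℕ → A) (x : ℕ → B) : Prop :=
  ∃ s, OnewayRun T.toOnewayAut w s ∧
    OnewayParityCond T.toOnewayAut (fun i => (s i, w i, s (i + 1))) ∧
    FlattenTo (fun i => T.out (s i, w i, s (i + 1))) x

/-- Number of occurrences of `a` in the list `l` (classically). -/
noncomputable def occ {C : Type} (a : C) (l : List C) : ℕ :=
  l.countP fun x => @decide (x = a) (Classical.propDecidable _)

/-- A substitution `σ : R → (R ⊎ B)*` is copyless if every register occurs at most once in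
the concatenation of all the `σ r'`. -/
def Copyless {R C : Type} [Fintype R] (σ : R → List (R ⊕ C)) : Prop :=
  ∀ r : R, (∑ r' : R, occ (Sum.inl r) (σ r')) ≤ 1

/-- Applying an assignment `ν : R → B*` (extended to a morphism `(R ⊎ B)* → B*`). -/
def subApply {R C : Type} (ν : R → List C) : List (R ⊕ C) → List C
  | [] => []
  | Sum.inl r :: l => ν r ++ subApply ν l
  | Sum.inr b :: l => b :: subApply ν l

/-- A copyless parity streaming string transducer: a (deterministic) one-way parity
automaton with a finite set `R` of registers, a distinguished output register, and copyless
register updates, where the update of `outReg` always starts with `outReg`. -/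
structure CPSST (A B : Type) extends OnewayAut A where
  R : Type
  finR : Fintype R
  outReg : R
  upd : (Q × A × Q) → R → List (R ⊕ B)
  copyless : ∀ t, @Copyless R B finR (upd t)
  out_form : ∀ t, ∃ γ, upd t outReg = Sum.inl outReg :: γ

attribute [instance] CPSST.finR

/-- The register contents along a run: `ν_0 r = ε` and `ν_{i+1} = ν_i ∘ λ(t_i)`. -/
def regVal (T : CPSST A B) (w : ℕ → A) (s : ℕ → T.Q) : ℕ → T.R → List B
  | 0 => fun _ => []
  | i + 1 => fun r => subApply (regVal T w s i) (T.upd (s i, w i, s (i + 1)) r)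

/-- `T.Realizes w x` : the (deterministic) CPSST `T` has an accepting run on `w` whose
output-register contents are unbounded with limit `x`. -/
def CPSST.Realizes (T : CPSST A B) (w : ℕ → A) (x : ℕ → B) : Prop :=
  ∃ s, OnewayRun T.toOnewayAut w s ∧
    OnewayParityCond T.toOnewayAut (fun i => (s i, w i, s (i + 1))) ∧
    (∀ i, IsPrefixOf (regVal T w s i T.outReg) x) ∧
    (∀ m, ∃ i, m ≤ (regVal T w s i T.outReg).length)

/-- The one-way parity transducer with the same underlying automaton as the CPSST `T`,
which outputs on each transition the (copyless) substitution that `T` applies. -/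
def enrich (T : CPSST A B) :
    OnewayTrans A {σ : T.R → List (T.R ⊕ B) // Copyless σ} where
  toOnewayAut := T.toOnewayAut
  out := fun t => [⟨T.upd t, T.copyless t⟩]

/-! ## Merging forests -/

/-- A merging forest on `(Q⁺ ⊎ Q⁻, χ, ℓ)`: a finite rooted forest (given by a `parent` map
with no cycles) whose leaves (childless nodes) are injectively labeled in `Q⁻` and carry a
`χ`-tuple of integers `< ℓ`, whose roots are injectively labeled in `Q⁺`, and in which every
unary node (exactly one child) is a root. -/
structure MForest (Qp Qm χ : Type) (ℓ : ℕ) where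
  V : Type
  finV : Fintype V
  parent : V → Option V
  acyc : ∀ v : V, ¬ Relation.TransGen (fun a b => parent a = some b) v v
  leafLab : V → Qm
  rootLab : V → Qp
  tup : V → χ → ℕ
  tup_lt : ∀ v, (∀ u, parent u ≠ some v) → ∀ c, tup v c < ℓ
  leaf_inj : ∀ u v, (∀ u', parent u' ≠ some u) → (∀ v', parent v' ≠ some v) →
    leafLab u = leafLab v → u = v
  root_inj : ∀ u v, parent u = none → parent v = none → rootLab u = rootLab v → u = v
  unary_root : ∀ v : V, (∃! u, parent u = some v) → parent v = none

attribute [instance] MForest.finV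

/-- Isomorphism of merging forests: a bijection of the nodes commuting with `parent` and
preserving the leaf labels, the leaf tuples and the root labels. -/
def MFIso {Qp Qm χ : Type} {ℓ : ℕ} (F G : MForest Qp Qm χ ℓ) : Prop :=
  ∃ e : F.V ≃ G.V,
    (∀ v, G.parent (e v) = Option.map e (F.parent v)) ∧
    (∀ v, (∀ u, F.parent u ≠ some v) →
      F.leafLab v = G.leafLab (e v) ∧ ∀ c, F.tup v c = G.tup (e v) c) ∧
    (∀ v, F.parent v = none → F.rootLab v = G.rootLab (e v))

end Paper

namespace Paper

/-- The transducer obtained from `T` by dropping the acceptance condition (`χ := ∅`). -/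
def dropAcc {A B : Type} (T : TwoWayTrans A B) : TwoWayTrans A B where
  toTwoWayAut := T.toTwoWayAut
  CIdx := Empty
  finC := inferInstance
  color := fun c _ => c.elim
  out := T.out

theorem step_unique {A : Type} (M : TwoWayAut A) (hdet : Deterministic M) (w w' : ℕ → A)
    (c c₁ c₂ : M.Q × ℕ) (t t' : M.Q × Option A × M.Q)
    (hw : ∀ m, m < c.2 + 1 → w m = w' m)
    (h : StepVia M w c t c₁) (h' : StepVia M w' c t' c₂) : t = t' ∧ c₁ = c₂ := by
  obtain ⟨p, a, q⟩ := t
  obtain ⟨p', a', q'⟩ := t'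
  obtain ⟨r, k⟩ := c
  obtain ⟨q₁, k₁⟩ := c₁
  obtain ⟨q₂, k₂⟩ := c₂
  obtain ⟨h1, h2, h3, h4⟩ := h
  obtain ⟨h1', h2', h3', h4'⟩ := h'
  simp only at *
  subst h2 h3 h2' h3'
  have e1 := hw k (by omega)
  have e2 := hw (k - 1) (by omega)
  have ha : a = a' := by
    rw [e1, e2] at h4
    rcases h4 with h | h | h <;> rcases h4' with h' | h' | h' <;> grind
  subst ha
  have hq := hdet _ _ _ _ h1 h1'
  subst hq
  refine ⟨rfl, ?_⟩
  have : k₁ = k₂ := by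
    rcases h4 with h | h | h <;> rcases h4' with h' | h' | h' <;> grind
  rw [this]

theorem step_pos_le {A : Type} (M : TwoWayAut A) (w : ℕ → A)
    (c c₁ : M.Q × ℕ) (t : M.Q × Option A × M.Q)
    (h : StepVia M w c t c₁) : c₁.2 ≤ c.2 + 1 := by
  obtain ⟨-, -, -, h⟩ := h
  omega

theorem run_unique {A : Type} (M : TwoWayAut A) (hdet : Deterministic M) (w w' : ℕ → A)
    (cfg cfg' : ℕ → M.Q × ℕ) (tr tr' : ℕ → M.Q × Option A × M.Q)
    (h : IsRun M w cfg tr) (h' : IsRun M w' cfg' tr') (n : ℕ)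
    (hw : ∀ m, m < n → w m = w' m) :
    ∀ i, i ≤ n → cfg i = cfg' i ∧ (cfg i).2 ≤ i ∧ ∀ j, j < i → tr j = tr' j := by
  intro i
  induction i with
  | zero =>
    intro _
    refine ⟨h.1.trans h'.1.symm, by rw [h.1], by simp⟩
  | succ i ih =>
    intro hi
    obtain ⟨hc, hp, ht⟩ := ih (by omega)
    have s := h.2 i
    have s' := h'.2 i
    rw [← hc] at s'
    obtain ⟨e1, e2⟩ := step_unique M hdet w w' _ _ _ _ _ (fun m hm => hw m (by omega)) s s'
    have := step_pos_le M w _ _ _ s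
    refine ⟨e2, by omega, fun j hj => ?_⟩
    rcases Nat.lt_succ_iff_lt_or_eq.mp hj with hj | rfl
    · exact ht j hj
    · exact e1

theorem prefixCat_congr {C : Type} (f g : ℕ → List C) (n : ℕ) (h : ∀ j, j < n → f j = g j) :
    prefixCat f n = prefixCat g n := by
  induction n with
  | zero => rfl
  | succ n ih =>
    simp only [prefixCat]
    rw [ih (fun j hj => h j (by omega)), h n (by omega)]

/-- Let `T` be a deterministic two-way parity transducer and `T' = dropAcc T`
the transducer obtained by dropping the acceptance condition.  Then `dom T ⊆ dom T'` and
`⟦T'⟧` agrees with `⟦T⟧` on `dom T` (first conjunct), and for every `u ∈ dom T'` and every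
sequence of words of `dom T` converging to `u` (in the metric `d(u,v) = 2^{-|u∧v|}`), the
sequence of their images under `⟦T⟧` converges to `⟦T'⟧ u` (second conjunct). -/
theorem dropAcc_closure (A B : Type) [Fintype A] [Fintype B]
    (T : TwoWayTrans A B) (hdet : Deterministic T.toTwoWayAut) :
    (∀ w x, T.Realizes w x → (dropAcc T).Realizes w x) ∧
    (∀ (u : ℕ → A) (x : ℕ → B), (dropAcc T).Realizes u x →
      ∀ (us : ℕ → ℕ → A) (ys : ℕ → ℕ → B),
        (∀ i, T.Realizes (us i) (ys i)) →
        (∀ n : ℕ, ∃ i₀, ∀ j, i₀ ≤ j → ∀ m, m < n → us j m = u m) →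
        (∀ n : ℕ, ∃ i₀, ∀ j, i₀ ≤ j → ∀ m, m < n → ys j m = x m)) := by
  constructor
  · rintro w x ⟨cfg, tr, h1, h2, -, h4⟩
    exact ⟨cfg, tr, h1, h2, fun c => c.elim, h4⟩
  · rintro u x ⟨cfg, tr, h1, -, -, h4⟩ us ys hus hconv n
    obtain ⟨N, hN⟩ := h4.2 n
    obtain ⟨i₀, hi₀⟩ := hconv N
    refine ⟨i₀, fun j hj m hm => ?_⟩
    obtain ⟨cfg', tr', h1', -, -, h4'⟩ := hus j
    have key := (run_unique T.toTwoWayAut hdet (us j) u cfg' cfg tr' tr h1' h1 N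
      (hi₀ j hj) N le_rfl).2.2
    have e : prefixCat (fun i => T.out (tr' i)) N = prefixCat (fun i => T.out (tr i)) N :=
      prefixCat_congr _ _ N (fun j hj => by simp only [key j hj])
    have hlt : m < (prefixCat (fun i => T.out (tr i)) N).length := lt_of_lt_of_le hm hN
    have a := h4.1 N m hlt
    have b := h4'.1 N
    rw [e] at b
    exact (b m hlt).symm.trans a

end Paper
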